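/- Let f: F_2^3 → F_2 be the elementary CA rule 210, i.e. f(x_1, x_2, x_3) = x_1 ⊕ x_3 ⊕ x_2 x_3. Then for every n with 3 ≤ n ≤ 20, the function f*: F_2^n → F_2 given by the CA-based construction is both balanced and semi-bent. -/

import Mathlib

/-- The CA-based construction: given a local rule `f` of `m` variables and `n ≥ m`,
the `n`-variable function `f*` is the XOR of all output cells of the no-boundary CA. -/
def caStar (m n : ℕ) (h : m ≤ n) (f : (Fin m → ZMod 2) → ZMod 2) :
    (Fin n → ZMod 2) → ZMod 2 :=
  fun x => ∑ i : Fin (n - m + 1),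
    f (fun j => x ⟨i.val + j.val, by have hi := i.isLt; have hj := j.isLt; omega⟩)

/-- The ANF coefficient `a_I` of a Boolean function, via the Möbius transform:
`a_I = ⊕_{x : supp(x) ⊆ I} f(x)`. -/
def anf {n : ℕ} (f : (Fin n → ZMod 2) → ZMod 2) (I : Finset (Fin n)) : ZMod 2 :=
  ∑ x ∈ Finset.univ.filter (fun x : Fin n → ZMod 2 => ∀ i, x i = 1 → i ∈ I), f x

/-- The algebraic degree of a Boolean function: `max {|I| : a_I ≠ 0}` (0 for the zero function). -/
def algDegree {n : ℕ} (f : (Fin n → ZMod 2) → ZMod 2) : ℕ :=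
  (Finset.univ.filter fun I : Finset (Fin n) => anf f I ≠ 0).sup Finset.card

/-- The Walsh transform `W_f(a) = Σ_x (-1)^(f(x) ⊕ a·x)`. -/
def walsh {n : ℕ} (f : (Fin n → ZMod 2) → ZMod 2) (a : Fin n → ZMod 2) : ℤ :=
  ∑ x : Fin n → ZMod 2, (-1 : ℤ) ^ (f x + ∑ i, a i * x i).val

/-- The semi-bent value `λ`: `2^((n+1)/2)` for odd `n`, `2^((n+2)/2)` for even `n`. -/
def sbLambda (n : ℕ) : ℤ := if Odd n then 2 ^ ((n + 1) / 2) else 2 ^ ((n + 2) / 2)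

/-- A Boolean function is semi-bent if its Walsh transform takes only the values `0, λ, -λ`. -/
def semiBent {n : ℕ} (f : (Fin n → ZMod 2) → ZMod 2) : Prop :=
  ∀ a, walsh f a = 0 ∨ walsh f a = sbLambda n ∨ walsh f a = -sbLambda n

/-- A Boolean function is balanced if it takes the value 1 exactly `2^(n-1)` times. -/
def balanced {n : ℕ} (f : (Fin n → ZMod 2) → ZMod 2) : Prop :=
  (Finset.univ.filter fun x => f x = 1).card = 2 ^ (n - 1)

/-- `b` is a linear structure of `g` if the derivative `D_b g(x) = g(x) ⊕ g(x ⊕ b)` is constant. -/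
def isLinearStructure {n : ℕ} (g : (Fin n → ZMod 2) → ZMod 2)
    (b : Fin n → ZMod 2) : Prop :=
  (∀ x, g x + g (x + b) = 0) ∨ (∀ x, g x + g (x + b) = 1)

/-- Elementary CA rule 210: `f(x₁,x₂,x₃) = x₁ ⊕ x₃ ⊕ x₂x₃`. -/
def rule210 : (Fin 3 → ZMod 2) → ZMod 2 :=
  fun x => x 0 + x 2 + x 1 * x 2

def chi2 (v : ZMod 2) : ℤ := (-1 : ℤ) ^ v.val

theorem chi2_add (u v : ZMod 2) : chi2 (u + v) = chi2 u * chi2 v := by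
  revert u v; decide

theorem chi2_cases (u : ZMod 2) : chi2 u = 1 ∨ chi2 u = -1 := by
  revert u; decide

def pathE : (k : ℕ) → (ℕ → ZMod 2) → ZMod 2 → (Fin k → ZMod 2) → ZMod 2
  | 0, _, _, _ => 0
  | k + 1, c, p, x => (c 0 + p) * x 0 + pathE k (fun i => c (i + 1)) (x 0) (Fin.tail x)

def pathR : ℕ → (ℕ → ZMod 2) → ZMod 2 → ℤ
  | 0, _, _ => 1
  | k + 1, c, p => ∑ y : ZMod 2, chi2 ((c 0 + p) * y) * pathR k (fun i => c (i + 1)) y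

theorem sum_cons {k : ℕ} (g : (Fin (k + 1) → ZMod 2) → ℤ) :
    ∑ x, g x = ∑ y : ZMod 2, ∑ z : Fin k → ZMod 2, g (Fin.cons y z) := by
  rw [← Fintype.sum_prod_type', ← (Fin.consEquiv (fun _ => ZMod 2)).sum_comp]
  rfl

theorem sum_pathE (k : ℕ) : ∀ (c : ℕ → ZMod 2) (p : ZMod 2),
    ∑ x, chi2 (pathE k c p x) = pathR k c p := by
  induction k with
  | zero => intro c p; simp [pathE, pathR, chi2]
  | succ k ih =>
    intro c p
    rw [sum_cons]
    simp only [pathE, pathR, chi2_add, Fin.cons_zero, Fin.tail_cons, ← Finset.mul_sum, ih]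

theorem sum_z2 (g : ZMod 2 → ℤ) : ∑ y, g y = g 0 + g 1 := Fin.sum_univ_two g

theorem pathR_step (k : ℕ) (c : ℕ → ZMod 2) (p : ZMod 2) :
    pathR (k + 2) c p
      = 2 * chi2 (c 1 * (c 0 + p)) * pathR k (fun i => c (i + 2)) (c 0 + p) := by
  simp only [pathR, sum_z2, add_assoc, Nat.reduceAdd, zero_add]
  generalize c 0 + p = u
  generalize c 1 = v
  generalize pathR k (fun i => c (i + 2)) = r
  have h0 : chi2 0 = 1 := rfl
  have h1 : chi2 1 = -1 := rfl
  have h11 : (1 : ZMod 2) + 1 = 0 := rfl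
  have hz : ∀ w : ZMod 2, w = 0 ∨ w = 1 := by decide
  rcases hz u with rfl | rfl <;> rcases hz v with rfl | rfl <;> simp [h0, h1, h11] <;> ring

theorem pathR_val (k : ℕ) : ∀ (c : ℕ → ZMod 2) (p : ZMod 2),
    pathR k c p = 0 ∨ pathR k c p = 2 ^ ((k + 1) / 2) ∨ pathR k c p = -2 ^ ((k + 1) / 2) := by
  induction k using Nat.twoStepInduction with
  | zero => intro c p; simp [pathR]
  | one =>
    intro c p
    simp only [pathR, sum_z2]
    generalize c 0 + p = u
    revert u; decide
  | more k ih _ =>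
    intro c p
    rw [pathR_step]
    have e : (k + 2 + 1) / 2 = (k + 1) / 2 + 1 := by omega
    rw [e, pow_succ]
    rcases chi2_cases (c 1 * (c 0 + p)) with h | h <;>
    rcases ih (fun i => c (i + 2)) (c 0 + p) with h' | h' | h' <;> rw [h, h'] <;> 
    first
      | (left; ring; done)
      | (right; left; ring; done)
      | (right; right; ring; done)

theorem pathE_p (k : ℕ) (c : ℕ → ZMod 2) (p : ZMod 2) (x : Fin (k + 1) → ZMod 2) :
    pathE (k + 1) c p x = pathE (k + 1) c 0 x + p * x 0 := by
  simp only [pathE]; ring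

theorem caStar_succ (m : ℕ) (x : Fin (m + 4) → ZMod 2) :
    caStar 3 (m + 4) (by omega) rule210 x
      = x 0 + x 2 + x 1 * x 2 + caStar 3 (m + 3) (by omega) rule210 (Fin.tail x) := by
  unfold caStar
  refine (Fin.sum_univ_succ (n := m + 1) _).trans ?_
  congr 1

theorem exponent_form (m : ℕ) : ∀ a : Fin (m + 3) → ZMod 2, ∃ c : ℕ → ZMod 2,
    ∀ x : Fin (m + 3) → ZMod 2,
      caStar 3 (m + 3) (by omega) rule210 x + ∑ i, a i * x i
        = (a 0 + 1) * x 0 + pathE (m + 2) c 0 (Fin.tail x) := by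
  induction m with
  | zero =>
    intro a
    refine ⟨fun i => if i = 0 then a 1 else a 2 + 1, fun x => ?_⟩
    have : caStar 3 3 (by omega) rule210 x = x 0 + x 2 + x 1 * x 2 := by
      unfold caStar
      refine (Fin.sum_univ_succ (n := 0) _).trans ?_
      simp [rule210]
    rw [this]
    simp [pathE, Fin.sum_univ_three, Fin.tail]
    ring
  | succ m ih =>
    intro a
    obtain ⟨c, hc⟩ := ih (fun i => a i.succ + if i = 1 then 1 else 0)
    refine ⟨fun i => Nat.casesOn i (a 1 + 1) c, fun x => ?_⟩
    have h := hc (Fin.tail x)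
    rw [caStar_succ, Fin.sum_univ_succ]
    have e1 : ∑ i : Fin (m + 3), (a i.succ + if i = 1 then 1 else 0) * Fin.tail x i
        = ∑ i : Fin (m + 3), a i.succ * x i.succ + x 2 := by
      simp only [add_mul, Finset.sum_add_distrib, ite_mul, one_mul, zero_mul,
        Finset.sum_ite_eq', Finset.sum_ite_eq, Finset.mem_univ, if_true]
      rfl
    rw [e1] at h
    have e2 : pathE (m + 3) (fun i => Nat.casesOn i (a 1 + 1) c) 0 (Fin.tail x)
        = (a 1 + 1 + 0) * x 1 + pathE (m + 2) c (x 1) (Fin.tail (Fin.tail x)) := rfl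
    have e3 : Fin.tail (Fin.tail x) 0 = x 2 := rfl
    have e4 : Fin.tail x 0 = x 1 := rfl
    have e5 : (0 : Fin (m + 3)) ≠ 1 := by simp [Fin.ext_iff]
    have e6 : a (Fin.succ 0) = a 1 := rfl
    rw [if_neg e5, e4, e6] at h
    change _ = (a 0 + 1) * x 0 + pathE (m + 3) (fun i => Nat.casesOn i (a 1 + 1) c) 0 (Fin.tail x)
    rw [e2, pathE_p, e3]
    have hx : x 2 + x 2 = 0 := CharTwo.add_self_eq_zero _
    linear_combination h + 0 * hx

theorem walsh_form (m : ℕ) (a : Fin (m + 3) → ZMod 2) : ∃ c : ℕ → ZMod 2,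
    walsh (caStar 3 (m + 3) (by omega) rule210) a
      = (1 + chi2 (a 0 + 1)) * pathR (m + 2) c 0 := by
  obtain ⟨c, hc⟩ := exponent_form m a
  refine ⟨c, ?_⟩
  unfold walsh
  simp only [hc]
  change ∑ x : Fin (m + 3) → ZMod 2, chi2 _ = _
  rw [sum_cons]
  simp only [chi2_add, Fin.cons_zero, Fin.tail_cons, ← Finset.mul_sum, sum_pathE]
  rw [sum_z2]
  simp only [mul_zero, mul_one]
  have h0 : chi2 0 = 1 := rfl
  rw [h0, chi2_add]; ring

theorem balanced_of_walsh {n : ℕ} (f : (Fin (n + 1) → ZMod 2) → ZMod 2) (h : walsh f 0 = 0) :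
    balanced f := by
  have hp : ∀ v : ZMod 2, (-1 : ℤ) ^ v.val = 1 - 2 * (if v = 1 then 1 else 0) := by decide
  unfold walsh at h
  simp only [Pi.zero_apply, zero_mul, Finset.sum_const_zero, add_zero, hp,
    Finset.sum_sub_distrib, ← Finset.mul_sum, Finset.sum_boole] at h
  simp [pow_succ] at h
  unfold balanced
  have : ((Finset.univ.filter fun x => f x = 1).card : ℤ) = 2 ^ n := by linarith
  exact_mod_cast this

/-- rule 210 yields balanced semi-bent functions for all `3 ≤ n ≤ 20`. -/
theorem rule210_balanced_semibent :
    ∀ n (h : 3 ≤ n), n ≤ 20 →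
      balanced (caStar 3 n h rule210) ∧ semiBent (caStar 3 n h rule210) := by
  intro n h _
  obtain ⟨m, rfl⟩ : ∃ m, n = m + 3 := ⟨n - 3, by omega⟩
  have h1 : chi2 1 = -1 := rfl
  constructor
  · apply balanced_of_walsh
    obtain ⟨c, hc⟩ := walsh_form m 0
    rw [hc]
    simp [h1]
  · intro a
    obtain ⟨c, hc⟩ := walsh_form m a
    rw [hc]
    have hl : sbLambda (m + 3) = 2 * 2 ^ ((m + 2 + 1) / 2) := by
      unfold sbLambda
      rw [← pow_succ']
      split_ifs with ho
      · rw [Nat.odd_iff] at ho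
        congr 1; omega
      · rw [Nat.not_odd_iff] at ho
        congr 1; omega
    rw [hl]
    rcases chi2_cases (a 0 + 1) with e | e <;> rw [e]
    · rcases pathR_val (m + 2) c 0 with h' | h' | h' <;> rw [h']
      · left; ring
      · right; left; ring
      · right; right; ring
    · left; ring
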